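/- arXiv:1006.5285 — 2 statements merged into one kernel-verified Lean document; each statement's English description precedes it below -/
import Mathlib

section
/- Let p be a prime, let K be a compact Hausdorff abelian topological group containing a closed subgroup topologically isomorphic to ℤ_p², and let G be a dense locally minimal subgroup of K. Then the free rank of G is at least 𝔠 = 2^ℵ₀; in particular, G has cardinality at least 𝔠. -/
open scoped TensorProduct

/-- A Hausdorff topological abelian group `(G, τ)` is *locally minimal* if there exists a
neighborhood `V` of `0` such that the only Hausdorff group topology `σ` coarser than `τ`
for which `V` is still a `σ`-neighborhood of `0` is `τ` itself. -/
def LocallyMinimal (G : Type*) [AddGroup G] [τ : TopologicalSpace G] : Prop :=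
  ∃ V ∈ nhds (0 : G), ∀ σ : TopologicalSpace G, τ ≤ σ →
    @IsTopologicalAddGroup G σ _ → @T2Space G σ → V ∈ @nhds G σ 0 → σ = τ

/-!
A dense locally minimal subgroup `G` of `K` is locally essential: it meets every nontrivial closed
subgroup `H` of `K` contained in a suitable neighbourhood of `0`, since otherwise the quotient map
`K → K ⧸ H` would induce a strictly coarser Hausdorff group topology on `G`. In the copy of
`ℤ_p × ℤ_p`, consider the closed subgroups `{(c * t, c * t * a) | t ∈ ℤ_p}`, one for each slope `a`,
with a fixed `c ≠ 0` so small that they all lie in that neighbourhood. Each of them contains a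
nonzero element of `G`, from which the slope can be read off. Hence `G` contains a torsion-free
subgroup of cardinality at least `𝔠`, and the free rank of an uncountable torsion-free group equals
its cardinality. The same works for every compact domain `R` of characteristic zero in place of
`ℤ_p`: by compactness `c * t` and `c * t * a` tend to `0` uniformly in `t` and `a` as `c → 0`, and
`R` is uncountable by the Baire category theorem.
-/

open Cardinal Filter Function Set Topology
open scoped nonZeroDivisors

universe u v

section Topology

theorem eq_of_isInducing_domRestrict {X Y : Type*} [TopologicalSpace X] [TopologicalSpace Y]
    [T2Space X] {s : Set X} (hs : Dense s) {f : X → Y} (hf : Continuous f)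
    (hind : IsInducing (s.domRestrict f)) {x : X} {d : s} (hfx : f x = f d) : x = d := by
  have hne : (comap ((↑) : s → X) (𝓝 x)).NeBot := mem_closure_iff_comap_neBot.1 (hs x)
  have hfd : Tendsto (s.domRestrict f) (comap (↑) (𝓝 x)) (𝓝 (f d)) :=
    (hfx ▸ hf.tendsto x).comp tendsto_comap
  have hle : comap ((↑) : s → X) (𝓝 x) ≤ 𝓝 d := by
    rw [hind.nhds_eq_comap]
    exact tendsto_iff_comap.1 hfd
  exact tendsto_nhds_unique tendsto_comap (continuous_subtype_val.continuousAt.mono_left hle)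

theorem perfectSpace_of_compactSpace_of_infinite (A : Type*) [AddGroup A] [TopologicalSpace A]
    [IsTopologicalAddGroup A] [CompactSpace A] [Infinite A] : PerfectSpace A := by
  refine perfectSpace_iff_forall_not_isolated.2 fun x ↦ ⟨fun hx ↦ ?_⟩
  have : DiscreteTopology A := (AddAction.IsPretransitive.discreteTopology_iff A x).2
    ((isOpen_singleton_iff_punctured_nhds x).2 hx)
  exact (finite_of_compact_of_discrete (X := A)).not_infinite ‹_›

theorem uncountable_of_baireSpace_of_perfectSpace (X : Type*) [TopologicalSpace X] [T1Space X]
    [BaireSpace X] [PerfectSpace X] [Nonempty X] : Uncountable X := by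
  by_contra hX
  have : Countable X := not_uncountable_iff.1 hX
  obtain ⟨x, hx⟩ := nonempty_interior_of_iUnion_of_closed
    (fun x : X ↦ isClosed_singleton (x := x)) (iUnion_of_singleton X)
  simp [interior_singleton] at hx

end Topology

section FreeRank

theorem rank_eq_mk_of_isTorsionFree_of_lift_mk_lt {A : Type u} {M : Type v} [CommRing A]
    [IsDomain A] [Infinite A] [AddCommGroup M] [Module A M] [Module.IsTorsionFree A M]
    (hlt : Cardinal.lift.{v} #A < Cardinal.lift.{u} #M) : Module.rank A M = #M := by
  refine (rank_le_card A M).antisymm ?_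
  let F := FractionRing A
  let ι := LocalizedModule.mkLinearMap A⁰ M
  have hι : Injective ι := (IsLocalizedModule.injective_iff_isRegular A⁰ ι).2 fun c ↦
    (IsRegular.of_ne_zero (nonZeroDivisors.ne_zero c.2)).isSMulRegular
  have hML : Cardinal.lift.{u} #M ≤ #(LocalizedModule A⁰ M) := by
    rw [← lift_umax.{v, u}, ← lift_id'.{v, max u v} #(LocalizedModule A⁰ M)]
    exact lift_mk_le_lift_mk_of_injective hι
  have hrank : Module.rank F (LocalizedModule A⁰ M) = #(LocalizedModule A⁰ M) := by
    have : Infinite F := .of_injective _ (IsFractionRing.injective A F)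
    refine Module.Free.rank_eq_mk_of_infinite_lt F _ ?_
    rw [Cardinal.mk_fractionRing, lift_id'.{u, max u v}, lift_umax.{u, v}]
    exact hlt.trans_le hML
  have hrankA : Module.rank A (LocalizedModule A⁰ M) = Cardinal.lift.{u} (Module.rank A M) := by
    rw [← lift_umax.{v, u}, ← lift_id'.{v, max u v} (Module.rank A _)]
    exact IsLocalizedModule.lift_rank_eq A⁰ ι le_rfl
  rw [← Cardinal.lift_le.{u}, ← hrankA, ← IsLocalization.rank_eq F A⁰ le_rfl, hrank]
  exact hML

theorem rank_rat_tensorProduct_int (M : Type*) [AddCommGroup M] :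
    Module.rank ℚ (ℚ ⊗[ℤ] M) = Module.rank ℤ M :=
  (TensorProduct.isBaseChange ℤ M ℚ).rank_eq

end FreeRank

theorem LocallyMinimal.exists_nhds_isInducing {G : Type u} [AddGroup G] [TopologicalSpace G]
    (hG : LocallyMinimal G) :
    ∃ V ∈ 𝓝 (0 : G), ∀ {Y : Type v} [AddGroup Y] [TopologicalSpace Y] [IsTopologicalAddGroup Y]
      [T2Space Y] (f : G →+ Y), Continuous f → Injective f → V ∈ comap f (𝓝 0) →
        IsInducing f := by
  obtain ⟨V, hV, hmin⟩ := hG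
  refine ⟨V, hV, fun f hf hinj hVf ↦ ⟨.symm <| hmin _ hf.le_induced ?_ ?_ ?_⟩⟩
  · exact topologicalAddGroup_induced f
  · let := TopologicalSpace.induced f inferInstance
    exact T2Space.of_injective_continuous hinj continuous_induced_dom
  · rwa [nhds_induced, map_zero]

/-- A subgroup `G` of a topological group `K` is *locally essential* if `K` has a neighbourhood `V`
of `0` such that `G` meets nontrivially every nontrivial closed normal subgroup of `K` contained
in `V`. Unlike local minimality, it is stated through the closed subgroups of `K` and so can be
restricted to the copy of `ℤ_p × ℤ_p` in `K`. -/
def LocallyEssential {K : Type*} [AddGroup K] [TopologicalSpace K] (G : AddSubgroup K) : Prop :=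
  ∃ V ∈ 𝓝 (0 : K), ∀ H : AddSubgroup K, H.Normal → IsClosed (H : Set K) → (H : Set K) ⊆ V →
    Disjoint G H → H = ⊥

theorem LocallyMinimal.locallyEssential {K : Type*} [AddGroup K] [TopologicalSpace K]
    [IsTopologicalAddGroup K] [T2Space K] {G : AddSubgroup K} (hmin : LocallyMinimal G)
    (hG : Dense (G : Set K)) : LocallyEssential G := by
  obtain ⟨V, hV, hind⟩ := hmin.exists_nhds_isInducing
  obtain ⟨W, hW, hWV⟩ := mem_nhds_subtype (G : Set K) 0 V |>.1 hV
  obtain ⟨U, hU, hUW⟩ := exists_nhds_zero_half hW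
  refine ⟨U, hU, fun H hHn hHc hHU hdisj ↦ (AddSubgroup.eq_bot_iff_forall H).2 fun h hh ↦ ?_⟩
  let π : G →+ K ⧸ H := (QuotientAddGroup.mk' H).comp G.subtype
  have hπ : Continuous π := QuotientAddGroup.continuous_mk.comp continuous_subtype_val
  have hπinj : Injective π := (injective_iff_map_eq_zero π).2 fun g hg ↦
    Subtype.ext <| AddSubgroup.disjoint_def.1 hdisj g.2 ((QuotientAddGroup.eq_zero_iff _).1 hg)
  have hVπ : V ∈ comap π (𝓝 0) := by
    refine ⟨(↑) '' U, QuotientAddGroup.isOpenMap_coe.image_mem_nhds hU, ?_⟩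
    rintro g ⟨u, hu, hug⟩
    have hug' : -u + g ∈ U := hHU (QuotientAddGroup.eq.1 hug)
    exact hWV (by simpa using hUW u hu _ hug')
  exact eq_of_isInducing_domRestrict hG (d := 0) QuotientAddGroup.continuous_mk
    (hind π hπ hπinj hVπ) ((QuotientAddGroup.eq_zero_iff h).2 hh)

theorem LocallyEssential.comap {A K : Type*} [AddGroup A] [TopologicalSpace A] [AddCommGroup K]
    [TopologicalSpace K] {G : AddSubgroup K} (hG : LocallyEssential G) (f : A →+ K)
    (hf : IsClosedEmbedding f) : LocallyEssential (G.comap f) := by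
  obtain ⟨V, hV, hess⟩ := hG
  refine ⟨f ⁻¹' V, hf.continuous.continuousAt.preimage_mem_nhds (by rwa [map_zero]),
    fun H _ hHc hHV hdisj ↦ (AddSubgroup.map_eq_bot_iff_of_injective H hf.injective).1 <|
      hess (H.map f) inferInstance ?_ ?_ ?_⟩
  · exact hf.isClosedMap _ hHc
  · exact image_subset_iff.2 hHV
  · rw [AddSubgroup.disjoint_def] at hdisj ⊢
    rintro _ hxG ⟨a, ha, rfl⟩
    rw [hdisj hxG ha, map_zero]

section CompactDomain

variable {R : Type v} [Ring R] [TopologicalSpace R] [IsTopologicalRing R] [CompactSpace R]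

theorem exists_ne_zero_forall_mul_mem [Infinite R] {U : Set (R × R)} (hU : U ∈ 𝓝 0) :
    ∃ c : R, c ≠ 0 ∧ ∀ t a : R, (c * t, c * t * a) ∈ U := by
  have hev : ∀ᶠ c in 𝓝 (0 : R), ∀ q ∈ (univ : Set (R × R)), (c * q.1, c * q.1 * q.2) ∈ U := by
    refine isCompact_univ.eventually_forall_of_forall_eventually fun q _ ↦ ?_
    have hcont : Continuous fun z : R × R × R ↦ (z.1 * z.2.1, z.1 * z.2.1 * z.2.2) := by fun_prop
    exact hcont.continuousAt.eventually_mem (by simpa [Prod.mk_zero_zero] using hU)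
  have := perfectSpace_of_compactSpace_of_infinite R
  obtain ⟨c, hcU, hc0⟩ := ((hev.filter_mono nhdsWithin_le_nhds).and
    (eventually_mem_nhdsWithin (a := (0 : R)) (s := {0}ᶜ))).exists
  exact ⟨c, hc0, fun t a ↦ hcU (t, a) trivial⟩

theorem LocallyEssential.exists_ne_zero_mul_mem [T2Space R] [Infinite R]
    {G : AddSubgroup (R × R)} (hG : LocallyEssential G) (a : R) :
    ∃ t : R, t ≠ 0 ∧ (t, t * a) ∈ G := by
  obtain ⟨V, hV, hess⟩ := hG
  obtain ⟨c, hc0, hcV⟩ := exists_ne_zero_forall_mul_mem hV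
  let line : R →+ R × R :=
    (AddMonoidHom.mulLeft c).prod ((AddMonoidHom.mulRight a).comp (AddMonoidHom.mulLeft c))
  have hline : Continuous line := by
    change Continuous fun t ↦ (c * t, c * t * a)
    fun_prop
  have hne : line.range ≠ ⊥ := fun h ↦ hc0 <| by
    simpa [line] using congrArg Prod.fst (DFunLike.congr_fun (AddMonoidHom.range_eq_bot_iff.1 h) 1)
  have hmeet : ¬ Disjoint G line.range := fun h ↦ hne <| hess _ inferInstance
    (isCompact_range hline).isClosed (range_subset_iff.2 fun t ↦ hcV t a) h
  simp only [AddSubgroup.disjoint_def, not_forall] at hmeet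
  obtain ⟨_, htG, ⟨t, rfl⟩, ht0⟩ := hmeet
  exact ⟨c * t, fun hct ↦ ht0 (by simp [line, hct]), htG⟩

theorem LocallyEssential.mk_le_mk [T2Space R] [Infinite R] [NoZeroDivisors R]
    {G : AddSubgroup (R × R)} (hG : LocallyEssential G) : #R ≤ #G := by
  choose t ht0 htG using hG.exists_ne_zero_mul_mem
  refine mk_le_of_injective (f := fun a ↦ (⟨_, htG a⟩ : G)) fun a b hab ↦ ?_
  obtain ⟨ht, hta⟩ : t a = t b ∧ t a * a = t b * b := by simpa using hab
  exact mul_left_cancel₀ (ht0 b) (by rwa [ht] at hta)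

theorem LocallyEssential.mk_le_rank [T2Space R] [NoZeroDivisors R] [CharZero R]
    {G : AddSubgroup (R × R)} (hG : LocallyEssential G) : #R ≤ Module.rank ℤ G := by
  have := perfectSpace_of_compactSpace_of_infinite R
  have := uncountable_of_baireSpace_of_perfectSpace R
  have hRG : #R ≤ #G := hG.mk_le_mk
  have hrank : Module.rank ℤ G = #G := rank_eq_mk_of_isTorsionFree_of_lift_mk_lt <| by
    simpa using (aleph0_lt_mk (α := R)).trans_le hRG
  rwa [hrank]

theorem freeRank_ge_continuum_of_locallyMinimal_general [NoZeroDivisors R] [CharZero R]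
    {K : Type u} [AddCommGroup K] [TopologicalSpace K] [IsTopologicalAddGroup K] [T2Space K]
    (f : R × R →+ K) (hf : Continuous f) (hinj : Injective f) (G : AddSubgroup K)
    (hG : Dense (G : Set K)) (hmin : LocallyMinimal G) :
    Cardinal.lift.{u} #R ≤ Cardinal.lift.{v} (Module.rank ℚ (ℚ ⊗[ℤ] G)) := by
  have : T2Space R :=
    .of_injective_continuous (hinj.comp (Prod.mk_left_injective 0)) (by fun_prop)
  have hess : LocallyEssential (G.comap f) :=
    (hmin.locallyEssential hG).comap f (hf.isClosedEmbedding hinj)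
  have hinjG : Injective (f.addSubgroupComap G) := fun x y h ↦
    Subtype.ext <| hinj <| congrArg Subtype.val h
  calc Cardinal.lift.{u} #R
    _ ≤ Cardinal.lift.{u} (Module.rank ℤ (G.comap f)) := Cardinal.lift_le.2 hess.mk_le_rank
    _ ≤ Cardinal.lift.{v} (Module.rank ℤ G) :=
      (f.addSubgroupComap G).toIntLinearMap.lift_rank_le_of_injective hinjG
    _ = Cardinal.lift.{v} (Module.rank ℚ (ℚ ⊗[ℤ] G)) := by rw [rank_rat_tensorProduct_int]

end CompactDomain

theorem continuum_le_mk_padicInt (p : ℕ) [Fact p.Prime] : 𝔠 ≤ #ℤ_[p] :=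
  (continuum_le_cardinal_of_nontriviallyNormedField ℚ_[p]).trans_eq
    (IsFractionRing.cardinalMk ℤ_[p] ℚ_[p])

/-- Let `p` be a prime, `K` a compact Hausdorff abelian group containing a closed
subgroup topologically isomorphic to `ℤ_p²`, and `G` a dense locally minimal subgroup of
`K`. Then the free rank of `G` (the dimension of the `ℚ`-vector space `ℚ ⊗_ℤ G`) is at
least `𝔠`; in particular `G` has cardinality at least `𝔠`. -/
theorem freeRank_ge_continuum_of_locallyMinimal {K : Type*} [AddCommGroup K]
    [TopologicalSpace K] [IsTopologicalAddGroup K] [T2Space K] [CompactSpace K]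
    (p : ℕ) [Fact p.Prime] (N : AddSubgroup K) (hN : IsClosed (N : Set K))
    (e : ↥N ≃+ (ℤ_[p] × ℤ_[p])) (he : Continuous e) (he' : Continuous e.symm)
    (G : AddSubgroup K) (hG : Dense (G : Set K)) (hmin : LocallyMinimal ↥G) :
    Cardinal.continuum ≤ Module.rank ℚ (ℚ ⊗[ℤ] ↥G) ∧
      Cardinal.continuum ≤ Cardinal.mk ↥G := by
  have hrank : 𝔠 ≤ Module.rank ℚ (ℚ ⊗[ℤ] G) := by
    simpa using (lift_le.2 (continuum_le_mk_padicInt p)).trans <|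
      freeRank_ge_continuum_of_locallyMinimal_general (N.subtype.comp e.symm.toAddMonoidHom)
        (continuous_subtype_val.comp he') (Subtype.val_injective.comp e.symm.injective) G hG hmin
  exact ⟨hrank, hrank.trans <| (rank_rat_tensorProduct_int G).trans_le (rank_le_card ℤ G)⟩
end

section
/- Let K be a torsion-free compact Hausdorff abelian topological group and let G be a subgroup of K. Then G (with the subspace topology) is locally minimal if and only if G is minimal. -/
/-- A Hausdorff topological abelian group `(G, τ)` is *minimal* if there is no Hausdorff
group topology on `G` strictly coarser than `τ`. -/
def IsMinimal (G : Type*) [AddGroup G] [τ : TopologicalSpace G] : Prop :=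
  ∀ σ : TopologicalSpace G, τ ≤ σ →
    @IsTopologicalAddGroup G σ _ → @T2Space G σ → σ = τ

/-!
Call a subgroup `G ≤ K` essential within `W` if a closed subgroup of `closure G` that lies in `W`
and meets `G` trivially is trivial.

* If `G` is locally minimal, then it is essential within some neighbourhood `W` of `0`: a closed
  `N ⊆ W` meeting `G` trivially makes `G → K ⧸ N` injective, and the topology this induces on `G` is
  coarser than that of `G` but keeps `W ∩ G` a neighbourhood of `0`.
* If `K` is torsion-free, essentiality within a neighbourhood of `0` is essentiality, because every
  nontrivial closed `N ≤ K` has nontrivial subgroups in every neighbourhood of `0`. Otherwise `N`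
  has no small subgroups, so multiplication by some `p > 0` is positively expansive on `N`. It is
  also injective, and a compact space with a continuous injective positively expansive map is
  finite, while a finite torsion-free group is trivial.
* If `G` is essential and `σ` is a coarser Hausdorff group topology, then the cluster points in `K`
  of the `σ`-neighbourhood filter of `0` form a closed subgroup meeting `G` trivially. Hence `0` is
  the only cluster point, and by compactness `σ` is the original topology.
-/

open Filter Function Set Topology Uniformity Dynamics

theorem exists_forall_lt_mem_imp_mem {X Y : Type*} [TopologicalSpace X] [CompactSpace X]
    [TopologicalSpace Y] {g : ℕ → X → Y} (hg : ∀ k, Continuous (g k)) {C : Set Y}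
    (hC : IsClosed C) {O : Set X} (hO : ∀ x, (∀ k, g k x ∈ C) → O ∈ 𝓝 x) :
    ∃ n, ∀ x, (∀ k < n, g k x ∈ C) → x ∈ O := by
  let F : ℕ → Set X := fun n ↦ {x | ∀ k < n, g k x ∈ C}
  have hF_anti : Antitone F := fun m n hmn x hx k hk ↦ hx k (hk.trans_le hmn)
  have hF_closed (n : ℕ) : IsClosed (F n) := by
    simp only [F, ofPred_forall]
    exact isClosed_biInter fun k _ ↦ hC.preimage (hg k)
  exact exists_subset_nhds_of_compactSpace hF_anti.directed_ge hF_closed fun x hx ↦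
    hO x fun k ↦ mem_iInter.1 hx (k + 1) k k.lt_succ_self

section PositivelyExpansive

variable {X : Type*} {T : X → X} {E : SetRel X X}

theorem mem_dynEntourage_add_of_iterate {m : ℕ}
    (hm : ∀ x y, (T x, T y) ∈ dynEntourage T E m → (x, y) ∈ E) {x y : X} {k : ℕ}
    (h : (T^[k] x, T^[k] y) ∈ dynEntourage T E m) : (x, y) ∈ dynEntourage T E (m + k) := by
  induction k generalizing x y with
  | zero => exact h
  | succ k ih =>
    have hT : (T x, T y) ∈ dynEntourage T E (m + k) := ih h
    rw [mem_dynEntourage]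
    rintro (_ | i) hi
    · exact hm x y (dynEntourage_antitone T E (Nat.le_add_right m k) hT)
    · exact mem_dynEntourage.1 hT i (by lia)

variable [UniformSpace X]

/-- Positive expansivity of a self-map of a uniform space: distinct points are separated by a fixed
entourage at some time `n ≥ 0`. -/
def IsPositivelyExpansive (T : X → X) : Prop :=
  ∃ E ∈ 𝓤 X, ∀ x y, (∀ n, (T^[n] x, T^[n] y) ∈ E) → x = y

theorem IsPositivelyExpansive.exists_isClosed (hT : IsPositivelyExpansive T) :
    ∃ E ∈ 𝓤 X, IsClosed E ∧ ∀ x y, (∀ n, (T^[n] x, T^[n] y) ∈ E) → x = y := by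
  obtain ⟨E, hE, hsep⟩ := hT
  obtain ⟨C, ⟨hC, hC_closed⟩, hCE⟩ := uniformity_hasBasis_closed.mem_iff.1 hE
  exact ⟨C, hC, hC_closed, fun x y hxy ↦ hsep x y fun n ↦ hCE (hxy n)⟩

variable [CompactSpace X]

theorem exists_dynEntourage_imp_mem (hT : Continuous T) (hT_inj : Injective T) (hE : E ∈ 𝓤 X)
    (hE_closed : IsClosed E) (hsep : ∀ x y, (∀ n, (T^[n] x, T^[n] y) ∈ E) → x = y) :
    ∃ m, ∀ x y, (T x, T y) ∈ dynEntourage T E m → (x, y) ∈ E := by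
  obtain ⟨m, hm⟩ := exists_forall_lt_mem_imp_mem (X := X × X)
    (g := fun k ↦ Prod.map T^[k] T^[k] ∘ Prod.map T T) (O := E)
    (fun k ↦ ((hT.iterate k).prodMap (hT.iterate k)).comp (hT.prodMap hT)) hE_closed
    (by
      rintro ⟨x, y⟩ hxy
      obtain rfl : x = y := hT_inj (hsep _ _ hxy)
      exact nhds_le_uniformity x hE)
  exact ⟨m, fun x y hxy ↦ hm (x, y) (mem_dynEntourage.1 hxy)⟩

theorem IsPositivelyExpansive.finite (hexp : IsPositivelyExpansive T) (hT : Continuous T)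
    (hT_inj : Injective T) : Finite X := by
  obtain ⟨E, hE, hE_closed, hsep⟩ := hexp.exists_isClosed
  obtain ⟨m, hm⟩ := exists_dynEntourage_imp_mem hT hT_inj hE hE_closed hsep
  obtain ⟨D, hD, hD_symm, hDE⟩ := comp_symm_mem_uniformity_sets
    (dynEntourage_mem_uniformity (CompactSpace.uniformContinuous_of_continuous hT) hE m)
  obtain ⟨t, ht, hcover⟩ := isCompact_univ.totallyBounded D hD
  -- Along an ultrafilter of times, the orbit of each `x` stays near a single centre `c x ∈ t`, and
  -- `c x` determines `x`.
  have hcenter (x : X) : ∃ c ∈ t, ∀ᶠ n in hyperfilter ℕ, (T^[n] x, c) ∈ D :=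
    (Ultrafilter.eventually_exists_mem_iff ht).1 <| .of_forall fun n ↦ by
      simpa using hcover (mem_univ (T^[n] x))
  choose c hct hc using hcenter
  have := ht.to_subtype
  refine .of_injective (fun x ↦ (⟨c x, hct x⟩ : t)) fun x y hxy ↦ hsep x y fun k ↦ ?_
  have hcxy : c x = c y := congrArg Subtype.val hxy
  obtain ⟨n, ⟨hx, hy⟩, hkn⟩ := (((hc x).and (hc y)).and
    (Nat.hyperfilter_le_atTop (eventually_gt_atTop k))).exists
  have hn : (T^[n] x, T^[n] y) ∈ dynEntourage T E m :=
    hDE ⟨c x, hx, hD_symm.symm _ _ (hcxy ▸ hy)⟩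
  exact mem_dynEntourage.1 (mem_dynEntourage_add_of_iterate hm hn) k (by lia)

end PositivelyExpansive

section NoSmallSubgroups

/-- The NSS property: some neighbourhood of `0` contains no nontrivial subgroup. -/
def NoSmallSubgroups (G : Type*) [AddGroup G] [TopologicalSpace G] : Prop :=
  ∃ W ∈ 𝓝 (0 : G), ∀ H : AddSubgroup G, (H : Set G) ⊆ W → H = ⊥

theorem NoSmallSubgroups.exists_isClosed {G : Type*} [AddGroup G] [TopologicalSpace G]
    [IsTopologicalAddGroup G] (hG : NoSmallSubgroups G) :
    ∃ W ∈ 𝓝 (0 : G), IsClosed W ∧ ∀ x : G, (∀ k : ℕ, k • x ∈ W) → x = 0 := by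
  obtain ⟨W, hW, hnss⟩ := hG
  obtain ⟨C, hC, hC_closed, hCW⟩ :=
    exists_mem_nhds_isClosed_subset (inter_mem hW (neg_mem_nhds_zero G hW))
  refine ⟨C, hC, hC_closed, fun x hx ↦ AddSubgroup.zmultiples_eq_bot.1 (hnss _ ?_)⟩
  rintro _ ⟨k, rfl⟩
  obtain ⟨n, rfl | rfl⟩ := k.eq_nat_or_neg
  · simpa using (hCW (hx n)).1
  · simpa using (hCW (hx n)).2

theorem nsmul_mem_of_forall_pow_nsmul_mem {G : Type*} [AddMonoid G] {V W : Set G} {p : ℕ}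
    (hV : 0 ∈ V) (hVW : ∀ a ∈ V, ∀ b ∈ V, a + b ∈ W)
    (hp : ∀ x : G, (∀ k < p, k • x ∈ W) → x ∈ V) {x : G}
    (hx : ∀ n : ℕ, ∀ k < p, k • p ^ n • x ∈ V) (k : ℕ) : k • x ∈ V := by
  induction k using Nat.strong_induction_on generalizing x with
  | _ k ih =>
    obtain rfl | hk := k.eq_zero_or_pos
    · simpa using hV
    refine hp _ fun j hj ↦ ?_
    -- Since `j < p`, the quotient `j * k / p` is less than `k`, so induction applies to `p • x`.
    have hquot : (j * k / p) • p • x ∈ V := by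
      refine ih _ (Nat.div_lt_of_lt_mul (Nat.mul_lt_mul_of_pos_right hj hk)) fun n ↦ ?_
      simpa only [← mul_nsmul', ← pow_succ] using hx (n + 1)
    have hrem : (j * k % p) • x ∈ V := by
      simpa using hx 0 _ (Nat.mod_lt (j * k) (Nat.zero_lt_of_lt hj))
    have hdiv : j • k • x = (j * k / p) • p • x + (j * k % p) • x := by
      rw [← mul_nsmul', ← mul_nsmul', ← add_nsmul, Nat.div_add_mod']
    exact hdiv ▸ hVW _ hquot _ hrem

theorem NoSmallSubgroups.exists_nsmul_isPositivelyExpansive {G : Type*} [AddCommGroup G]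
    [UniformSpace G] [IsUniformAddGroup G] [CompactSpace G] (hG : NoSmallSubgroups G) :
    ∃ p ≠ 0, IsPositivelyExpansive fun x : G ↦ p • x := by
  obtain ⟨W, hW, hW_closed, hnss⟩ := hG.exists_isClosed
  obtain ⟨V, hV, hVW⟩ := exists_nhds_zero_half hW
  obtain ⟨q, hq⟩ := exists_forall_lt_mem_imp_mem (g := fun k (x : G) ↦ k • x) (O := V)
    continuous_const_smul hW_closed fun x hx ↦ hnss x hx ▸ hV
  set p := q + 1
  have hp (x : G) (hx : ∀ k < p, k • x ∈ W) : x ∈ V := hq x fun k hk ↦ hx k (by lia)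
  have hE : {x : G | ∀ k < p, k • x ∈ V} ∈ 𝓝 0 := by
    refine (eventually_all_finite (finite_lt_nat p)).2 fun k _ ↦ ?_
    exact (continuous_const_smul k).tendsto' 0 0 (smul_zero k) hV
  refine ⟨p, q.succ_ne_zero, _, (uniformity_eq_comap_nhds_zero G ▸ preimage_mem_comap hE),
    fun x y hxy ↦ ?_⟩
  have hmem := nsmul_mem_of_forall_pow_nsmul_mem (x := y - x) (mem_of_mem_nhds hV) hVW hp
    fun n ↦ by simpa [smul_iterate, nsmul_sub] using hxy n
  have hsub : y - x = 0 := hnss _ fun k ↦ by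
    simpa using hVW _ (hmem k) _ (mem_of_mem_nhds hV)
  exact (sub_eq_zero.1 hsub).symm

theorem NoSmallSubgroups.subsingleton {G : Type*} [AddCommGroup G] [TopologicalSpace G]
    [IsTopologicalAddGroup G] [CompactSpace G] [IsAddTorsionFree G] (hG : NoSmallSubgroups G) :
    Subsingleton G := by
  let := IsTopologicalAddGroup.rightUniformSpace G
  have := isUniformAddGroup_of_addCommGroup (G := G)
  obtain ⟨p, hp, hexp⟩ := hG.exists_nsmul_isPositivelyExpansive
  have : Finite G := hexp.finite (continuous_const_smul p) (nsmul_right_injective hp)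
  exact subsingleton_of_forall_eq 0 fun x ↦ (isOfFinAddOrder_of_finite x).eq_zero'

theorem exists_isClosed_addSubgroup_le_subset {K : Type*} [AddCommGroup K] [TopologicalSpace K]
    [IsTopologicalAddGroup K] [CompactSpace K] [IsAddTorsionFree K] {N : AddSubgroup K}
    (hN : IsClosed (N : Set K)) (hN_ne : N ≠ ⊥) {W : Set K} (hW : W ∈ 𝓝 0) :
    ∃ N' ≤ N, IsClosed (N' : Set K) ∧ (N' : Set K) ⊆ W ∧ N' ≠ ⊥ := by
  have : CompactSpace N := isCompact_iff_compactSpace.1 hN.isCompact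
  obtain ⟨C, hC, hC_closed, hCW⟩ := exists_mem_nhds_isClosed_subset hW
  have hsmall : ¬ NoSmallSubgroups N := by
    intro h
    have := h.subsingleton
    exact hN_ne N.eq_bot_of_subsingleton
  simp only [NoSmallSubgroups, not_exists, not_and, not_forall] at hsmall
  obtain ⟨H, hHC, hH⟩ := hsmall _ (continuous_subtype_val.tendsto' 0 0 N.coe_zero hC)
  have hmap_subset : (H.map N.subtype : Set K) ⊆ C := by simpa using hHC
  refine ⟨(H.map N.subtype).topologicalClosure,
    AddSubgroup.topologicalClosure_minimal _ (AddSubgroup.map_subtype_le H) hN,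
    AddSubgroup.isClosed_topologicalClosure _,
    (closure_minimal hmap_subset hC_closed).trans hCW, fun hbot ↦ hH ?_⟩
  exact (AddSubgroup.map_eq_bot_iff_of_injective _ N.subtype_injective).1
    (le_bot_iff.1 (hbot ▸ AddSubgroup.le_topologicalClosure _))

end NoSmallSubgroups

section QuotientTopology

variable {K : Type*} [AddCommGroup K] [TopologicalSpace K] (G N : AddSubgroup K)

/-- The topology that `G` inherits from `K ⧸ N`. It is Hausdorff when `N` is closed and meets `G`
trivially. -/
abbrev quotientTopology : TopologicalSpace G :=
  .induced ((QuotientAddGroup.mk' N).comp G.subtype) inferInstance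

theorem le_quotientTopology : instTopologicalSpaceSubtype ≤ quotientTopology G N :=
  continuous_iff_le_induced.1 (QuotientAddGroup.continuous_mk.comp continuous_subtype_val)

theorem nhds_zero_quotientTopology :
    @nhds G (quotientTopology G N) 0 = comap (fun g : G ↦ ((g : K) : K ⧸ N)) (𝓝 0) :=
  nhds_induced _ _

variable [IsTopologicalAddGroup K]

theorem isTopologicalAddGroup_quotientTopology :
    @IsTopologicalAddGroup G (quotientTopology G N) _ :=
  topologicalAddGroup_induced _

variable {G N}

theorem t2Space_quotientTopology (hN : IsClosed (N : Set K)) (hdisj : Disjoint N G) :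
    @T2Space G (quotientTopology G N) := by
  have hinj : Injective ((QuotientAddGroup.mk' N).comp G.subtype) := by
    refine (injective_iff_map_eq_zero _).2 fun g hg ↦ Subtype.ext ?_
    exact AddSubgroup.disjoint_def.1 hdisj ((QuotientAddGroup.eq_zero_iff _).1 hg) g.2
  let := quotientTopology G N
  exact .of_injective_continuous hinj continuous_induced_dom

theorem preimage_mem_nhds_quotientTopology (hN : IsCompact (N : Set K)) {W : Set K}
    (hW : IsOpen W) (hNW : (N : Set K) ⊆ W) :
    ((↑) ⁻¹' W : Set G) ∈ @nhds G (quotientTopology G N) 0 := by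
  obtain ⟨U, hU, hNU⟩ := compact_open_separated_add_right hN hW hNW
  rw [nhds_zero_quotientTopology]
  refine ⟨(↑) '' U, QuotientAddGroup.isOpenMap_coe.image_mem_nhds hU, ?_⟩
  rintro g ⟨u, hu, hug⟩
  have hmem : -u + (g : K) ∈ N := QuotientAddGroup.eq.1 hug
  simpa using hNU (Set.add_mem_add hmem hu)

theorem eq_bot_of_quotientTopology_eq [T2Space K]
    (h : quotientTopology G N = instTopologicalSpaceSubtype) (hNG : N ≤ G.topologicalClosure) :
    N = ⊥ := by
  refine (AddSubgroup.eq_bot_iff_forall N).2 fun n hn ↦ ?_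
  -- Points of `G` converging to `n` converge to `0` in `K ⧸ N`, hence in `G`.
  have : NeBot (comap ((↑) : G → K) (𝓝 n)) :=
    mem_closure_iff_comap_neBot.1 (hNG hn)
  have hquot : comap ((↑) : G → K) (𝓝 n) ≤ @nhds G (quotientTopology G N) 0 := by
    rw [nhds_zero_quotientTopology, ← map_le_iff_le_comap,
      ← (QuotientAddGroup.eq_zero_iff n).2 hn]
    exact (QuotientAddGroup.continuous_mk.tendsto n).comp tendsto_comap
  rw [h] at hquot
  exact tendsto_nhds_unique tendsto_comap ((continuous_subtype_val.tendsto 0).mono_left hquot)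

end QuotientTopology

section ClusterSubgroup

variable {K : Type*} [AddCommGroup K] [TopologicalSpace K] [IsTopologicalAddGroup K]
  {H : Type*} [AddGroup H] [TopologicalSpace H] [IsTopologicalAddGroup H] (f : H →+ K)

/-- The cluster points of `f` at `0`, that is, the points `x` such that `(0, x)` lies in the
closure of the graph of `f`. It measures the failure of `f` to be continuous. -/
def clusterSubgroup : AddSubgroup K where
  carrier := {x | MapClusterPt x (𝓝 0) f}
  zero_mem' := by
    refine mapClusterPt_iff_frequently.2 fun s hs hnot ↦ hnot.self_of_nhds ?_
    simpa using mem_of_mem_nhds hs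
  add_mem' {x y} hx hy := by
    have hadd : Tendsto (fun g : H × H ↦ g.1 + g.2) (𝓝 0 ×ˢ 𝓝 0) (𝓝 0) := by
      rw [← nhds_prod_eq]
      exact continuous_add.tendsto' _ _ (add_zero 0)
    refine .of_comp hadd ?_
    simpa [comp_def] using (hx.prodMap hy).continuousAt_comp continuous_add.continuousAt
  neg_mem' {x} hx := by
    refine .of_comp (continuous_neg.tendsto' 0 0 neg_zero) ?_
    simpa [comp_def] using hx.continuousAt_comp continuous_neg.continuousAt

theorem isClosed_clusterSubgroup : IsClosed (clusterSubgroup f : Set K) :=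
  isClosed_setOfPred_clusterPt

theorem clusterSubgroup_le_topologicalClosure_range :
    clusterSubgroup f ≤ f.range.topologicalClosure := fun _ hx ↦
  isClosed_closure.mem_of_mapClusterPt hx (.of_forall fun h ↦ subset_closure ⟨h, rfl⟩)

variable {f}

theorem disjoint_clusterSubgroup_range [T2Space H]
    (hf : .induced f inferInstance ≤ ‹TopologicalSpace H›) :
    Disjoint (clusterSubgroup f) f.range := by
  rw [AddSubgroup.disjoint_def]
  rintro _ hx ⟨h, rfl⟩
  have hcomap : comap f (𝓝 (f h)) ≤ 𝓝 h := by
    simpa only [nhds_induced] using nhds_mono hf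
  have : NeBot (𝓝 h ⊓ 𝓝 0) := by
    refine NeBot.mono ?_ (inf_le_inf_right _ hcomap)
    rwa [← map_neBot_iff f, inf_comm, Filter.push_pull, inf_comm]
  rw [eq_of_nhds_neBot this, map_zero]

theorem continuous_of_clusterSubgroup_eq_bot [CompactSpace K] (hf : clusterSubgroup f = ⊥) :
    Continuous f := by
  refine continuous_of_continuousAt_zero f ?_
  rw [ContinuousAt, map_zero]
  exact le_nhds_of_unique_clusterPt fun x hx ↦ (AddSubgroup.eq_bot_iff_forall _).1 hf x hx

end ClusterSubgroup

section Essential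

variable {K : Type*} [AddCommGroup K] [TopologicalSpace K] [IsTopologicalAddGroup K]

/-- Essentiality of `G` in its closure, tested only on closed subgroups contained in `W`. The
choice `W = univ` gives essential subgroups, and locally essential subgroups are those for which
some neighbourhood `W` of `0` works. -/
def EssentialWithin (G : AddSubgroup K) (W : Set K) : Prop :=
  ∀ N ≤ G.topologicalClosure, IsClosed (N : Set K) → (N : Set K) ⊆ W → Disjoint N G → N = ⊥

theorem LocallyMinimal.exists_essentialWithin [T2Space K] [CompactSpace K] {G : AddSubgroup K}
    (hG : LocallyMinimal G) : ∃ W ∈ 𝓝 (0 : K), EssentialWithin G W := by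
  obtain ⟨V, hV, hmin⟩ := hG
  have hbasis := (nhds_basis_opens (0 : K)).comap ((↑) : G → K)
  rw [← G.coe_zero, ← nhds_induced] at hbasis
  obtain ⟨W, ⟨hW_zero, hW⟩, hWV⟩ := hbasis.mem_iff.1 hV
  refine ⟨W, hW.mem_nhds hW_zero, fun N hNG hN hNW hdisj ↦ ?_⟩
  exact eq_bot_of_quotientTopology_eq (hmin _ (le_quotientTopology G N)
    (isTopologicalAddGroup_quotientTopology G N) (t2Space_quotientTopology hN hdisj)
    (mem_of_superset (preimage_mem_nhds_quotientTopology hN.isCompact hW hNW) hWV)) hNG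

theorem EssentialWithin.univ_of_mem_nhds [CompactSpace K] [IsAddTorsionFree K]
    {G : AddSubgroup K} {W : Set K} (hG : EssentialWithin G W) (hW : W ∈ 𝓝 0) :
    EssentialWithin G univ := by
  intro N hNG hN _ hdisj
  by_contra hN_ne
  obtain ⟨N', hN'N, hN', hN'W, hN'_ne⟩ := exists_isClosed_addSubgroup_le_subset hN hN_ne hW
  exact hN'_ne (hG N' (hN'N.trans hNG) hN' hN'W (hdisj.mono_left hN'N))

theorem EssentialWithin.isMinimal [CompactSpace K] {G : AddSubgroup K}
    (hG : EssentialWithin G univ) : IsMinimal G := by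
  intro σ hle hσ hT2
  let := σ
  have hbot : clusterSubgroup G.subtype = ⊥ := by
    refine hG _ ?_ (isClosed_clusterSubgroup _) (subset_univ _) ?_
    · simpa using clusterSubgroup_le_topologicalClosure_range G.subtype
    · simpa using disjoint_clusterSubgroup_range (f := G.subtype) hle
  exact hle.antisymm' (continuous_iff_le_induced.1 (continuous_of_clusterSubgroup_eq_bot hbot))

end Essential

theorem IsMinimal.locallyMinimal {G : Type*} [AddGroup G] [TopologicalSpace G]
    (hG : IsMinimal G) : LocallyMinimal G :=
  ⟨univ, univ_mem, fun σ hle hσ hT2 _ ↦ hG σ hle hσ hT2⟩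

/-- Let `K` be a torsion-free compact Hausdorff abelian group and `G` a subgroup of `K`.
Then `G` is locally minimal iff `G` is minimal. -/
theorem subgroup_of_torsionFree_compact_locallyMinimal_iff_minimal {K : Type*}
    [AddCommGroup K] [TopologicalSpace K] [IsTopologicalAddGroup K] [T2Space K]
    [CompactSpace K] (htf : ∀ x : K, IsOfFinAddOrder x → x = 0) (G : AddSubgroup K) :
    LocallyMinimal ↥G ↔ IsMinimal ↥G := by
  have : IsAddTorsionFree K :=
    isAddTorsionFree_iff_not_isOfFinAddOrder.2 fun x hx h ↦ hx (htf x h)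
  refine ⟨fun hG ↦ ?_, IsMinimal.locallyMinimal⟩
  obtain ⟨W, hW, hess⟩ := hG.exists_essentialWithin
  exact (hess.univ_of_mem_nhds hW).isMinimal
end
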